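/- Suppose 1/3 < α ≤ 1. Let T ⊆ V, let k ∈ ℕ with k' := k − |T| ≥ 1, let t be a real number, and set t' := t − val(T). Suppose there exists a set S with T ⊆ S ⊆ V, |S| = k and val(S) ≥ t, and let v ∈ V∖T be a vertex satisfying contribution(v, T) ≥ t'/k' + (3α−1)·(k−1). Then there exists a set S' with T ⊆ S' ⊆ V, |S'| = k, v ∈ S' and val(S') ≥ t. -/

import Mathlib

open Finset

variable {V : Type*} [Fintype V] [DecidableEq V]

/-- Number of edges of `G` with both endpoints in `S`. -/
def mIn (G : SimpleGraph V) [DecidableRel G.Adj] (S : Finset V) : ℕ :=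
  (G.edgeFinset.filter (fun e => ∀ v ∈ e, v ∈ S)).card

/-- Number of edges of `G` with exactly one endpoint in `S`. -/
def mCut (G : SimpleGraph V) [DecidableRel G.Adj] (S : Finset V) : ℕ :=
  (G.edgeFinset.filter (fun e => (∃ v ∈ e, v ∈ S) ∧ ∃ v ∈ e, v ∉ S)).card

/-- `val(S) = α·(m(S, V∖S) + counter(S)) + (1−α)·m(S)`. -/
noncomputable def val (G : SimpleGraph V) [DecidableRel G.Adj] (counter : V → ℕ) (α : ℝ)
    (S : Finset V) : ℝ :=
  α * ((mCut G S : ℝ) + ∑ v ∈ S, (counter v : ℝ)) + (1 - α) * (mIn G S : ℝ)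

/-- `degc(v) = deg(v) + counter(v)`. -/
def degc (G : SimpleGraph V) [DecidableRel G.Adj] (counter : V → ℕ) (v : V) : ℕ :=
  G.degree v + counter v

/-- `contribution(v, T) = α·degc(v) + (1−3α)·|N(v) ∩ T|`. -/
noncomputable def contribution (G : SimpleGraph V) [DecidableRel G.Adj] (counter : V → ℕ)
    (α : ℝ) (v : V) (T : Finset V) : ℝ :=
  α * (degc G counter v : ℝ) + (1 - 3 * α) * ((G.neighborFinset v ∩ T).card : ℝ)

/-!
Counting edges by their endpoints gives `val S = α ∑_{v ∈ S} degc v + (1 - 3α) m(S)`, so inserting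
`v` into `S` changes `val` by exactly `contribution v S`, and for `α ≥ 1/3` contributions decrease
as the set grows. Telescoping from `T` to `S`, the contributions to `S` of the elements of `S \ T`
sum to at most `val S - val T`, so some `u ∈ S \ T` contributes at most the average. Exchanging
`u` for `v` costs at most this average. The contribution of `v` drops by at most `3α - 1` for each
vertex of `S \ (T ∪ {u})`, which the slack `(3α - 1)(k - 1)` covers, so `v` brings in at least
`t' / k'` and the surplus `val S - t` shrinks by at most its `k'`-th part.
-/

section

variable (G : SimpleGraph V) [DecidableRel G.Adj] (counter : V → ℕ) {α : ℝ} {S T : Finset V}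
  {u v : V}

theorem sum_degree_eq_mCut_add_two_mul_mIn (S : Finset V) :
    ∑ v ∈ S, G.degree v = mCut G S + 2 * mIn G S := by
  have card_endpoints (e : Sym2 V) (he : e ∈ G.edgeFinset) :
      #{v ∈ S | v ∈ e} = (if (∃ v ∈ e, v ∈ S) ∧ ∃ v ∈ e, v ∉ S then 1 else 0) +
        2 * (if ∀ v ∈ e, v ∈ S then 1 else 0) := by
    induction e using Sym2.ind with
    | _ a b =>
      have hab : a ≠ b := G.ne_of_adj (by simpa using he)
      have endpoints : {v ∈ S | v ∈ s(a, b)} = {v ∈ ({a, b} : Finset V) | v ∈ S} := by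
        ext; simp [and_comm]
      rw [endpoints]
      by_cases ha : a ∈ S <;> by_cases hb : b ∈ S <;> simp [filter_insert, filter_singleton, *]
  calc ∑ v ∈ S, G.degree v
      = ∑ v ∈ S, #{e ∈ G.edgeFinset | v ∈ e} := by
        simp only [← G.card_incidenceFinset_eq_degree, G.incidenceFinset_eq_filter]
    _ = ∑ e ∈ G.edgeFinset, #{v ∈ S | v ∈ e} :=
        sum_card_bipartiteAbove_eq_sum_card_bipartiteBelow fun v e => v ∈ e
    _ = mCut G S + 2 * mIn G S := by
        rw [sum_congr rfl card_endpoints, sum_add_distrib, ← mul_sum, mCut, mIn, card_filter,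
          card_filter]

theorem mIn_insert (hv : v ∉ S) :
    mIn G (insert v S) = mIn G S + #(G.neighborFinset v ∩ S) := by
  have card_star : #((G.neighborFinset v ∩ S).image fun w => s(v, w)) =
      #(G.neighborFinset v ∩ S) :=
    card_image_of_injective _ fun _ _ => Sym2.congr_right.1
  have edges_insert : {e ∈ G.edgeFinset | ∀ w ∈ e, w ∈ insert v S} =
      {e ∈ G.edgeFinset | ∀ w ∈ e, w ∈ S} ∪
        (G.neighborFinset v ∩ S).image fun w => s(v, w) := by
    ext e
    induction e using Sym2.ind with
    | _ a b =>
      have := G.ne_of_adj (a := a) (b := b)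
      have := G.adj_comm a b
      simp only [mem_filter, mem_union, mem_image, mem_inter, SimpleGraph.mem_neighborFinset,
        SimpleGraph.mem_edgeFinset, SimpleGraph.mem_edgeSet, Sym2.mem_iff, mem_insert, Sym2.eq_iff]
      grind
  have disjoint_star : Disjoint {e ∈ G.edgeFinset | ∀ w ∈ e, w ∈ S}
      ((G.neighborFinset v ∩ S).image fun w => s(v, w)) := by
    simp only [disjoint_right, mem_image, mem_filter]
    rintro _ ⟨w, -, rfl⟩ ⟨-, hS⟩
    exact hv (hS v (Sym2.mem_mk_left v w))
  rw [mIn, edges_insert, card_union_of_disjoint disjoint_star, card_star, mIn]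

theorem val_eq_sum_degc_add_mIn (α : ℝ) (S : Finset V) :
    val G counter α S = α * ∑ v ∈ S, (degc G counter v : ℝ) + (1 - 3 * α) * mIn G S := by
  have degree_sum : ∑ v ∈ S, (G.degree v : ℝ) = mCut G S + 2 * mIn G S := by
    exact_mod_cast sum_degree_eq_mCut_add_two_mul_mIn G S
  simp only [_root_.val, degc, Nat.cast_add, sum_add_distrib, degree_sum]
  ring

theorem val_insert (hv : v ∉ S) :
    val G counter α (insert v S) = val G counter α S + contribution G counter α v S := by
  simp only [val_eq_sum_degc_add_mIn, contribution, sum_insert hv, mIn_insert G hv, Nat.cast_add]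
  ring

theorem contribution_erase_self (S : Finset V) (v : V) :
    contribution G counter α v (S.erase v) = contribution G counter α v S := by
  have inter_erase_self : G.neighborFinset v ∩ S.erase v = G.neighborFinset v ∩ S := by
    rw [inter_erase, erase_eq_of_notMem fun hv => G.notMem_neighborFinset_self v (mem_inter.1 hv).1]
  rw [contribution, contribution, inter_erase_self]

theorem val_insert_erase (hu : u ∈ S) (hv : v ∉ S) :
    val G counter α (insert v (S.erase u)) =
      val G counter α S - contribution G counter α u S +
        contribution G counter α v (S.erase u) := by
  have val_S := val_insert G counter (α := α) (notMem_erase u S)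
  rw [insert_erase hu, contribution_erase_self] at val_S
  rw [val_insert G counter (notMem_mono (erase_subset u S) hv), val_S, add_sub_cancel_right]

theorem contribution_antitone (hα : 1 / 3 ≤ α) (v : V) :
    Antitone (contribution G counter α v) := by
  intro A B hAB
  have hα' : 1 - 3 * α ≤ 0 := by linarith
  exact add_le_add_right (mul_le_mul_of_nonpos_left
    (mod_cast card_le_card (inter_subset_inter_left hAB)) hα') _

theorem contribution_le_contribution_add_card_sdiff (hα : 1 / 3 ≤ α) (v : V) (A B : Finset V) :
    contribution G counter α v A ≤
      contribution G counter α v B + (3 * α - 1) * #(B \ A) := by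
  have inter_subset : G.neighborFinset v ∩ B ⊆ (G.neighborFinset v ∩ A) ∪ (B \ A) := by grind
  have card_inter_le : (#(G.neighborFinset v ∩ B) : ℝ) ≤
      #(G.neighborFinset v ∩ A) + #(B \ A) := by
    exact_mod_cast (card_le_card inter_subset).trans (card_union_le _ _)
  have hα' : 0 ≤ 3 * α - 1 := by linarith
  rw [contribution, contribution]
  linarith [mul_le_mul_of_nonneg_left card_inter_le hα']

theorem sum_contribution_le_val_sub_val (hα : 1 / 3 ≤ α) (hTS : T ⊆ S) :
    ∑ u ∈ S \ T, contribution G counter α u S ≤ val G counter α S - val G counter α T := by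
  suffices ∀ W, Disjoint T W → ∑ u ∈ W, contribution G counter α u (T ∪ W) ≤
      val G counter α (T ∪ W) - val G counter α T by
    simpa only [union_sdiff_of_subset hTS] using this (S \ T) disjoint_sdiff
  intro W hTW
  induction W using Finset.induction_on with
  | empty => simp
  | insert w W hwW ih =>
    rw [disjoint_insert_right] at hTW
    have hw : w ∉ T ∪ W := notMem_union.2 ⟨hTW.1, hwW⟩
    calc ∑ u ∈ insert w W, contribution G counter α u (T ∪ insert w W)
        ≤ ∑ u ∈ insert w W, contribution G counter α u (T ∪ W) :=
          sum_le_sum fun u _ => contribution_antitone G counter hα u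
            (union_subset_union_right (subset_insert w W))
      _ = contribution G counter α w (T ∪ W) + ∑ u ∈ W, contribution G counter α u (T ∪ W) :=
          sum_insert hwW
      _ ≤ contribution G counter α w (T ∪ W) + (val G counter α (T ∪ W) - val G counter α T) := by
          gcongr
          exact ih hTW.2
      _ = val G counter α (T ∪ insert w W) - val G counter α T := by
          rw [union_insert, val_insert G counter hw]
          ring

theorem exists_contribution_le_average (hα : 1 / 3 ≤ α) (hTS : T ⊂ S) :
    ∃ u ∈ S \ T, contribution G counter α u S ≤
      (val G counter α S - val G counter α T) / #(S \ T) := by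
  have hne : (S \ T).Nonempty := sdiff_nonempty.2 hTS.2
  have hcard : (#(S \ T) : ℝ) ≠ 0 := mod_cast hne.card_ne_zero
  refine exists_le_of_sum_le hne ?_
  rw [sum_const, nsmul_eq_mul, mul_div_cancel₀ _ hcard]
  exact sum_contribution_le_val_sub_val G counter hα hTS.1

theorem exists_le_val_insert_erase (hα : 1 / 3 ≤ α) (hTS : T ⊂ S) (hv : v ∉ S) :
    ∃ u ∈ S \ T, val G counter α S - (val G counter α S - val G counter α T) / #(S \ T) +
        (contribution G counter α v T - (3 * α - 1) * (#(S \ T) - 1)) ≤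
      val G counter α (insert v (S.erase u)) := by
  obtain ⟨u, hu, hu_le⟩ := exists_contribution_le_average G counter hα hTS
  refine ⟨u, hu, ?_⟩
  have contribution_v_ge : contribution G counter α v T - (3 * α - 1) * (#(S \ T) - 1) ≤
      contribution G counter α v (S.erase u) := by
    rw [sub_le_iff_le_add, ← cast_card_erase_of_mem hu, ← erase_sdiff_comm]
    exact contribution_le_contribution_add_card_sdiff G counter hα v T (S.erase u)
  rw [val_insert_erase G counter (mem_sdiff.1 hu).1 hv]
  gcongr

theorem satisfactory_vertex_inclusion_general (hα : 1 / 3 ≤ α) {k : ℕ} {t : ℝ} (hTk : #T < k)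
    (hTS : T ⊆ S) (hScard : #S = k) (hSval : t ≤ val G counter α S)
    (hv : (t - val G counter α T) / ((k : ℝ) - #T) + (3 * α - 1) * ((k : ℝ) - #T - 1) ≤
      contribution G counter α v T) :
    ∃ S' : Finset V, T ⊆ S' ∧ #S' = k ∧ v ∈ S' ∧ t ≤ val G counter α S' := by
  by_cases hvS : v ∈ S
  · exact ⟨S, hTS, hScard, hvS, hSval⟩
  obtain ⟨u, hu, le_val⟩ := exists_le_val_insert_erase G counter hα
    (ssubset_of_subset_of_ne hTS (by rintro rfl; exact hTk.ne hScard)) hvS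
  obtain ⟨huS, huT⟩ := mem_sdiff.1 hu
  refine ⟨insert v (S.erase u), (subset_erase.2 ⟨hTS, huT⟩).trans (subset_insert _ _), ?_,
    mem_insert_self _ _, le_val.trans' ?_⟩
  · rw [card_insert_of_notMem (notMem_mono (erase_subset u S) hvS), card_erase_add_one huS, hScard]
  rw [← hScard, ← cast_card_sdiff hTS] at hv
  have surplus_le : (val G counter α S - t) / #(S \ T) ≤ val G counter α S - t :=
    div_le_self (sub_nonneg.2 hSval) (mod_cast card_pos.2 ⟨u, hu⟩)
  calc t ≤ val G counter α S - (val G counter α S - t) / #(S \ T) := by linarith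
    _ = val G counter α S - (val G counter α S - val G counter α T) / #(S \ T) +
        (t - val G counter α T) / #(S \ T) := by ring
    _ ≤ _ := by gcongr; exact le_sub_iff_add_le.2 hv

end

/-- Inclusion of a satisfactory vertex: for `1/3 < α ≤ 1`, if some solution `S`
(`T ⊆ S`, `|S| = k`, `val(S) ≥ t`) exists and `v ∉ T` has contribution at least
`t'/k' + (3α−1)(k−1)` (with `k' = k − |T|`, `t' = t − val(T)`), then some solution
contains `v`. -/
theorem satisfactory_vertex_inclusion (G : SimpleGraph V) [DecidableRel G.Adj]
    (counter : V → ℕ) (α : ℝ) (hα1 : 1 / 3 < α) (hα2 : α ≤ 1)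
    (T : Finset V) (k : ℕ) (t : ℝ) (hTk : T.card < k)
    (S : Finset V) (hTS : T ⊆ S) (hScard : S.card = k) (hSval : val G counter α S ≥ t)
    (v : V) (hvT : v ∉ T)
    (hv : contribution G counter α v T ≥
      (t - val G counter α T) / ((k : ℝ) - T.card) + (3 * α - 1) * ((k : ℝ) - 1)) :
    ∃ S' : Finset V, T ⊆ S' ∧ S'.card = k ∧ v ∈ S' ∧ val G counter α S' ≥ t := by
  refine satisfactory_vertex_inclusion_general G counter hα1.le hTk hTS hScard hSval (hv.trans' ?_)
  gcongr <;> linarith [(#T).cast_nonneg (α := ℝ)]
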